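/- arXiv:1411.1371 — 4 statements merged into one kernel-verified Lean document; each statement's English description precedes it below -/
import Mathlib

section
/- Let q ∈ (0,1), n ∈ ℕ₀, and let u be a real number with u > 0. Then (q^u;q)_n / (q;q)_n ≤ [n+1]_q^u. -/
/-!
The inequality follows by induction on `n`, comparing consecutive ratios of the two sides: with
`a = q^(n+1)`, what is needed is `(1 - q^(u+n)) / (1 - a) ≤ ((1 - a q) / (1 - a))^u`
(`one_sub_le_ratio_rpow`). If `u ≤ 1`, the left side is at most `1` and the right side at least `1`.
If `u ≥ 1`, Bernoulli's inequality is used twice: it bounds the right side below by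
`1 + u a (1 - q) / (1 - a)`, and `q^(u-1) ≥ q^u ≥ 1 - u (1 - q)` bounds the left side above by the
same quantity.
-/

/-- The real `q`-Pochhammer symbol `(a;q)_n`. -/
noncomputable def qPR (a q : ℝ) (n : ℕ) : ℝ := ∏ k ∈ Finset.range n, (1 - a * q ^ k)

/-- The `q`-number `[z]_q = (1-q^z)/(1-q)`. -/
noncomputable def qNum (q z : ℝ) : ℝ := (1 - q ^ z) / (1 - q)

/-- The comparison of consecutive ratios, with the denominator `1 - q^(n+1)` cleared. -/
lemma one_sub_le_ratio_rpow (q : ℝ) (h0 : 0 < q) (h1 : q < 1) (n : ℕ) (u : ℝ) (hu : 0 < u) :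
    1 - q ^ u * q ^ n ≤
      (1 - q ^ (n + 1)) * ((1 - q ^ (n + 2)) / (1 - q ^ (n + 1))) ^ u := by
  have hn : 0 < q ^ n := pow_pos h0 n
  have ha : 0 < q ^ (n + 1) := pow_pos h0 _
  have ha1 : 0 < 1 - q ^ (n + 1) := sub_pos.2 (pow_lt_one₀ h0.le h1 (by omega))
  have hr : (1 - q ^ (n + 2)) / (1 - q ^ (n + 1))
      = 1 + q ^ (n + 1) * (1 - q) / (1 - q ^ (n + 1)) := by
    field_simp
    ring
  have hs : 0 ≤ q ^ (n + 1) * (1 - q) / (1 - q ^ (n + 1)) :=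
    div_nonneg (mul_nonneg ha.le (by linarith)) ha1.le
  rw [hr]
  rcases le_total u 1 with h | h
  · have h2 : q ≤ q ^ u := by
      simpa using Real.rpow_le_rpow_of_exponent_ge h0 h1.le h
    have h3 := Real.one_le_rpow (le_add_of_nonneg_right hs) hu.le
    have h4 : q ^ (n + 1) ≤ q ^ u * q ^ n := by
      rw [pow_succ']
      exact mul_le_mul_of_nonneg_right h2 hn.le
    nlinarith
  · have hB := one_add_mul_self_le_rpow_one_add (s := q ^ (n + 1) * (1 - q) / (1 - q ^ (n + 1)))
      (by linarith) h
    have hB2 := one_add_mul_self_le_rpow_one_add (s := q - 1) (by linarith) h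
    rw [add_sub_cancel] at hB2
    have h5 : q ^ (n + 1) * q ^ u ≤ q ^ u * q ^ n := by
      rw [mul_comm]
      exact mul_le_mul_of_nonneg_left (pow_le_pow_of_le_one h0.le h1.le (by omega))
        (Real.rpow_nonneg h0.le u)
    calc 1 - q ^ u * q ^ n ≤ 1 - q ^ (n + 1) * (1 + u * (q - 1)) := by nlinarith
      _ = (1 - q ^ (n + 1)) * (1 + u * (q ^ (n + 1) * (1 - q) / (1 - q ^ (n + 1)))) := by
        field_simp
        ring
      _ ≤ _ := mul_le_mul_of_nonneg_left hB ha1.le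

theorem stmt1 (q : ℝ) (hq : q ∈ Set.Ioo (0:ℝ) 1) (n : ℕ) (u : ℝ) (hu : 0 < u) :
    qPR (q ^ u) q n / qPR q q n ≤ qNum q ((n : ℝ) + 1) ^ u := by
  obtain ⟨h0, h1⟩ := hq
  have hpos : ∀ m : ℕ, 0 < 1 - q ^ (m + 1) := fun m =>
    sub_pos.2 (pow_lt_one₀ h0.le h1 (by omega))
  have hq1 : 0 < 1 - q := by linarith
  have hnum : ∀ m : ℕ, qNum q ((m : ℝ) + 1) = (1 - q ^ (m + 1)) / (1 - q) := fun m => by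
    rw [qNum, ← Real.rpow_natCast q (m + 1)]
    push_cast
    rfl
  rw [hnum]
  induction n with
  | zero => simp [qPR, div_self hq1.ne']
  | succ n ih =>
    have hstep := one_sub_le_ratio_rpow q h0 h1 n u hu
    have hsplit : (1 - q ^ (n + 1 + 1)) / (1 - q)
        = (1 - q ^ (n + 1)) / (1 - q) * ((1 - q ^ (n + 2)) / (1 - q ^ (n + 1))) := by
      have := (hpos n).ne'
      field_simp
    have hfac : qPR (q ^ u) q (n + 1) / qPR q q (n + 1)
        = qPR (q ^ u) q n / qPR q q n * ((1 - q ^ u * q ^ n) / (1 - q ^ (n + 1))) := by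
      simp only [qPR, Finset.prod_range_succ, pow_succ']
      rw [mul_div_mul_comm]
    rw [hfac, hsplit, Real.mul_rpow (div_pos (hpos n) hq1).le
      (div_pos (hpos (n + 1)) (hpos n)).le]
    refine mul_le_mul ih ((div_le_iff₀' (hpos n)).2 hstep) (div_nonneg ?_ (hpos n).le)
      (Real.rpow_nonneg (div_pos (hpos n) hq1).le u)
    exact sub_nonneg.2 (mul_le_one₀ (Real.rpow_le_one h0.le h1.le hu.le) (pow_pos h0 n).le
      (pow_le_one₀ h0.le h1.le))
end

section
/- Let q ∈ (0,1), k, n ∈ ℕ₀ with k ≤ n, and let z ≥ 0 be real. Then (q^{z+k};q)_{n-k} / (1-q)^{n-k} ≤ ([n]_q! / [k]_q!) · [1+n]_q^{z}. -/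
/-- The `q`-factorial `[n]_q! = [1]_q [2]_q ⋯ [n]_q`. -/
noncomputable def qFact (q : ℝ) (n : ℕ) : ℝ := ∏ k ∈ Finset.Icc 1 n, qNum q k

lemma qNum_pos {q z : ℝ} (h0 : 0 < q) (h1 : q < 1) (hz : 0 < z) : 0 < qNum q z :=
  div_pos (sub_pos.2 (Real.rpow_lt_one h0.le h1 hz)) (sub_pos.2 h1)

lemma qNum_mono {q : ℝ} (h0 : 0 < q) (h1 : q < 1) {x y : ℝ} (h : x ≤ y) :
    qNum q x ≤ qNum q y := by
  have := Real.rpow_le_rpow_of_exponent_ge h0 h1.le h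
  have := sub_pos.2 h1
  unfold qNum
  gcongr

lemma qNum_add {q : ℝ} (h0 : 0 < q) (x y : ℝ) :
    qNum q (x + y) = qNum q x + q ^ x * qNum q y := by
  unfold qNum
  rw [Real.rpow_add h0]
  ring

lemma qNum_one {q : ℝ} (h1 : q < 1) : qNum q 1 = 1 := by
  unfold qNum
  rw [Real.rpow_one, div_self (sub_pos.2 h1).ne']

lemma qNum_sub_one_le {q z : ℝ} (h0 : 0 < q) (h1 : q < 1) (hz : 1 ≤ z) :
    qNum q (z - 1) ≤ z := by
  have hB := one_add_mul_self_le_rpow_one_add (s := q - 1) (by linarith) hz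
  rw [show 1 + (q - 1) = q by ring] at hB
  have hm := Real.rpow_le_rpow_of_exponent_ge h0 h1.le (show z - 1 ≤ z by linarith)
  unfold qNum
  rw [div_le_iff₀ (sub_pos.2 h1)]
  linarith

/-- The estimate carrying the induction step from `n` to `n + 1`, for real `x = n`. -/
lemma qNum_step {q z x : ℝ} (h0 : 0 < q) (h1 : q < 1) (hz : 0 ≤ z) (hx : 0 ≤ x) :
    qNum q (z + x) * qNum q (1 + x) ^ z ≤ qNum q (1 + x) * qNum q (1 + (x + 1)) ^ z := by
  have hN : 0 < qNum q (1 + x) := qNum_pos h0 h1 (by linarith)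
  have hM : 0 < qNum q (1 + (x + 1)) := qNum_pos h0 h1 (by linarith)
  rcases le_total z 1 with h | h
  · have ha := qNum_mono h0 h1 (show z + x ≤ 1 + x by linarith)
    have hb := qNum_mono h0 h1 (show 1 + x ≤ 1 + (x + 1) by linarith)
    gcongr
  · have hQ : 0 < q ^ (1 + x) := Real.rpow_pos_of_pos h0 _
    have hMe : qNum q (1 + (x + 1)) = qNum q (1 + x) * (1 + q ^ (1 + x) / qNum q (1 + x)) := by
      rw [← add_assoc, qNum_add h0, qNum_one h1]
      field_simp
    have hs : 0 ≤ q ^ (1 + x) / qNum q (1 + x) := by positivity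
    have hB := one_add_mul_self_le_rpow_one_add (s := q ^ (1 + x) / qNum q (1 + x))
      (by linarith) h
    have hL : qNum q (z + x) ≤ qNum q (1 + x) * (1 + z * (q ^ (1 + x) / qNum q (1 + x))) := by
      rw [show z + x = (1 + x) + (z - 1) by ring, qNum_add h0]
      have hw := mul_le_mul_of_nonneg_left (qNum_sub_one_le h0 h1 h) hQ.le
      have he : qNum q (1 + x) * (1 + z * (q ^ (1 + x) / qNum q (1 + x)))
          = qNum q (1 + x) + q ^ (1 + x) * z := by
        field_simp
      linarith
    rw [hMe, Real.mul_rpow hN.le (by linarith)]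
    calc _ ≤ (qNum q (1 + x) * (1 + q ^ (1 + x) / qNum q (1 + x)) ^ z) * qNum q (1 + x) ^ z := by
          gcongr
          exact hL.trans (by gcongr)
      _ = _ := by ring

lemma qPR_div_succ {q : ℝ} (h0 : 0 < q) (z : ℝ) (k m : ℕ) :
    qPR (q ^ (z + (k : ℝ))) q (m + 1) / (1 - q) ^ (m + 1) =
      qPR (q ^ (z + (k : ℝ))) q m / (1 - q) ^ m * qNum q (z + ((k + m : ℕ) : ℝ)) := by
  unfold qPR qNum
  rw [Finset.prod_range_succ, pow_succ, mul_div_mul_comm, ← Real.rpow_natCast q m,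
    ← Real.rpow_add h0]
  push_cast
  rw [add_assoc]

lemma qFact_succ (q : ℝ) (n : ℕ) : qFact q (n + 1) = qFact q n * qNum q (1 + (n : ℝ)) := by
  unfold qFact
  rw [Finset.prod_Icc_succ_top (by omega)]
  push_cast
  rw [add_comm (n : ℝ) 1]

lemma qFact_pos {q : ℝ} (h0 : 0 < q) (h1 : q < 1) (n : ℕ) : 0 < qFact q n := by
  refine Finset.prod_pos fun i hi => qNum_pos h0 h1 ?_
  exact_mod_cast (Finset.mem_Icc.1 hi).1

theorem stmt3 (q : ℝ) (hq : q ∈ Set.Ioo (0:ℝ) 1) (k n : ℕ) (hkn : k ≤ n)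
    (z : ℝ) (hz : 0 ≤ z) :
    qPR (q ^ (z + (k : ℝ))) q (n - k) / (1 - q) ^ (n - k) ≤
      (qFact q n / qFact q k) * qNum q (1 + (n : ℝ)) ^ z := by
  obtain ⟨h0, h1⟩ := hq
  obtain ⟨m, rfl⟩ := Nat.exists_eq_add_of_le hkn
  clear hkn
  rw [Nat.add_sub_cancel_left]
  have hk := qFact_pos h0 h1 k
  induction m with
  | zero =>
    have h : 1 ≤ qNum q (1 + (k : ℝ)) :=
      (qNum_one h1).symm.le.trans (qNum_mono h0 h1 (by simp))
    simpa [qPR, div_self hk.ne'] using Real.one_le_rpow h hz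
  | succ m ih =>
    have hn := qFact_pos h0 h1 (k + m)
    have hstep := qNum_step h0 h1 hz (Nat.cast_nonneg (α := ℝ) (k + m))
    have hnn : 0 ≤ qNum q (z + ((k + m : ℕ) : ℝ)) := by
      have := qNum_mono h0 h1 (show (0 : ℝ) ≤ z + ((k + m : ℕ) : ℝ) by positivity)
      simpa [qNum] using this
    rw [qPR_div_succ h0, ← add_assoc, qFact_succ, Nat.cast_succ (k + m)]
    calc _ ≤ qFact q (k + m) / qFact q k * qNum q (1 + ((k + m : ℕ) : ℝ)) ^ z
            * qNum q (z + ((k + m : ℕ) : ℝ)) := by gcongr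
      _ = qFact q (k + m) / qFact q k * (qNum q (z + ((k + m : ℕ) : ℝ))
            * qNum q (1 + ((k + m : ℕ) : ℝ)) ^ z) := by ring
      _ ≤ qFact q (k + m) / qFact q k * (qNum q (1 + ((k + m : ℕ) : ℝ))
            * qNum q (1 + (((k + m : ℕ) : ℝ) + 1)) ^ z) := by gcongr
      _ = _ := by ring
end

section
/- Let q ∈ (0,1), a, b ∈ (0, q^{-1}), n ∈ ℕ₀, and x ∈ ℂ. Then the little q-Laguerre/Wall polynomials satisfy the connection relation p_n(x;a|q) = (q^{-n(n-1)/2} / (qa;q)_n) ∑_{j=0}^n [ q^{j(j-1)/2 + n(n-j)} (-a)^{n-j} (q^{n-j+1}, qb; q)_j (b q^{1+j-n}/a; q)_{n-j} / (q;q)_j ] · p_j(x;b|q). -/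
/-!
Both sides are polynomials in `x`, so it suffices to compare the coefficients of `x ^ k`. Writing
`n = k + N`, `A = a q ^ (k + 1)`, `B = b q ^ (k + 1)`, and rewriting every shifted factorial with a
negative power of `q` in its argument through ordinary ones, the comparison becomes
`(A;q)_N / (q;q)_N = ∑_{m + r = N} (B;q)_r / (q;q)_r * ∏_{i < m} (B - A q ^ i) / (q;q)_m`,
a form of the `q`-Chu–Vandermonde sum (`qVandermonde`). It follows by induction on `N` from
`1 - A q ^ (r + m) = (1 - B q ^ r) + q ^ r (B - A q ^ m)` and
`1 - q ^ (r + m) = (1 - q ^ r) + q ^ r (1 - q ^ m)`.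
The reduction of a single summand is `connection_term`.
-/

open scoped Real

/-- The complex `q`-Pochhammer symbol `(a;q)_n`. -/
noncomputable def qP (a q : ℂ) (n : ℕ) : ℂ := ∏ k ∈ Finset.range n, (1 - a * q ^ k)

/-- The infinite complex `q`-Pochhammer symbol `(a;q)_∞`. -/
noncomputable def qPInf (a q : ℂ) : ℂ := ∏' k : ℕ, (1 - a * q ^ k)

/-- The basic hypergeometric series `ᵣφₛ(a₁,…,aᵣ; b₁,…,bₛ; q, z)`. -/
noncomputable def qHyp (A B : List ℂ) (q z : ℂ) : ℂ :=
  ∑' k : ℕ, ((A.map fun a => qP a q k).prod / (qP q q k * (B.map fun b => qP b q k).prod)) *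
    ((-1 : ℂ) ^ k * q ^ (k * (k - 1) / 2)) ^ (1 + B.length - A.length) * z ^ k

/-- The positive real power `q ^ e` of `0 < q`, viewed as a complex number. -/
noncomputable def rq (q e : ℝ) : ℂ := ((q ^ e : ℝ) : ℂ)

/-- The little `q`-Laguerre/Wall polynomial `pₙ(x; a | q)`. -/
noncomputable def lqL (n : ℕ) (x a q : ℂ) : ℂ := qHyp [q ^ (-(n : ℤ)), 0] [a * q] q (q * x)

/-- The homogeneous shifted factorial `∏_{i < m} (b - a q ^ i)`. -/
noncomputable def qPH (b a q : ℂ) (m : ℕ) : ℂ := ∏ i ∈ Finset.range m, (b - a * q ^ i)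

lemma qP_succ (a q : ℂ) (n : ℕ) : qP a q (n + 1) = qP a q n * (1 - a * q ^ n) :=
  Finset.prod_range_succ _ _

lemma qPH_succ (b a q : ℂ) (n : ℕ) : qPH b a q (n + 1) = qPH b a q n * (b - a * q ^ n) :=
  Finset.prod_range_succ _ _

lemma qP_add (a q : ℂ) (m n : ℕ) : qP a q (m + n) = qP a q m * qP (a * q ^ m) q n := by
  simp only [qP, Finset.prod_range_add]
  congr 1
  exact Finset.prod_congr rfl fun i _ => by ring

lemma qPH_mul (b a q c : ℂ) (m : ℕ) : qPH (b * c) (a * c) q m = c ^ m * qPH b a q m := by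
  induction m with
  | zero => simp [qPH]
  | succ m ih => rw [qPH_succ, qPH_succ, ih]; ring

lemma triangle_succ' (m : ℕ) : (m + 1) * (m + 1 - 1) / 2 = m * (m - 1) / 2 + m := by
  rw [← Nat.choose_two_right, ← Nat.choose_two_right, Nat.choose_succ_succ' m 1]
  simp [add_comm]

lemma triangle_add (j m : ℕ) :
    (j + m) * (j + m - 1) / 2 = j * (j - 1) / 2 + m * (m - 1) / 2 + j * m := by
  induction m with
  | zero => simp
  | succ m ih => rw [← add_assoc, triangle_succ', triangle_succ', ih]; ring

/-- The `q`-Chu–Vandermonde sum in homogeneous form. -/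
lemma qVandermonde (A B q : ℂ) (hq : ∀ n, qP q q n ≠ 0) (N : ℕ) :
    ∑ p ∈ Finset.HasAntidiagonal.antidiagonal N, (qP B q p.1 / qP q q p.1) * (qPH B A q p.2 / qP q q p.2) =
      qP A q N / qP q q N := by
  have hq1 : ∀ n : ℕ, 1 - q ^ (n + 1) ≠ 0 := fun n h => hq (n + 1) (by
    rw [qP_succ, ← pow_succ', h, mul_zero])
  have hu : ∀ r, (1 - q ^ (r + 1)) * (qP B q (r + 1) / qP q q (r + 1)) =
      qP B q r / qP q q r * (1 - B * q ^ r) := fun r => by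
    have h1 := hq r
    have h2 := hq1 r
    rw [qP_succ, qP_succ, ← pow_succ']
    field_simp
  have hv : ∀ m, (1 - q ^ (m + 1)) * (qPH B A q (m + 1) / qP q q (m + 1)) =
      qPH B A q m / qP q q m * (B - A * q ^ m) := fun m => by
    have h1 := hq m
    have h2 := hq1 m
    rw [qPH_succ, qP_succ, ← pow_succ']
    field_simp
  obtain ⟨u, hU⟩ : ∃ u : ℕ → ℂ, ∀ r, qP B q r / qP q q r = u r := ⟨_, fun _ => rfl⟩
  obtain ⟨v, hV⟩ : ∃ v : ℕ → ℂ, ∀ m, qPH B A q m / qP q q m = v m := ⟨_, fun _ => rfl⟩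
  simp only [hU, hV] at hu hv ⊢
  induction N with
  | zero => simp [← hU, ← hV, qP, qPH]
  | succ N ih =>
    have h1 := hq N
    have h2 := hq1 N
    apply mul_left_cancel₀ h2
    have hR : (1 - q ^ (N + 1)) * (qP A q (N + 1) / qP q q (N + 1)) =
        qP A q N / qP q q N * (1 - A * q ^ N) := by
      rw [qP_succ, qP_succ, ← pow_succ']
      field_simp
    rw [hR, ← ih]
    have hL : (1 - q ^ (N + 1)) * ∑ p ∈ Finset.HasAntidiagonal.antidiagonal (N + 1), u p.1 * v p.2 =
        ∑ p ∈ Finset.HasAntidiagonal.antidiagonal (N + 1), ((1 - q ^ p.1) * u p.1) * v p.2 +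
        ∑ p ∈ Finset.HasAntidiagonal.antidiagonal (N + 1), (q ^ p.1 * u p.1) * ((1 - q ^ p.2) * v p.2) := by
      rw [Finset.mul_sum, ← Finset.sum_add_distrib]
      refine Finset.sum_congr rfl fun p hp => ?_
      rw [← Finset.HasAntidiagonal.mem_antidiagonal.mp hp]
      ring
    -- the first sum loses its term with `r = 0`, the second its term with `m = 0`
    rw [hL, Finset.Nat.sum_antidiagonal_succ,
      Finset.Nat.sum_antidiagonal_succ' (f := fun p => (q ^ p.1 * u p.1) * ((1 - q ^ p.2) * v p.2))]
    simp only [hu, hv, pow_zero, sub_self, zero_mul, mul_zero, zero_add]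
    rw [← Finset.sum_add_distrib, Finset.sum_mul]
    refine Finset.sum_congr rfl fun p hp => ?_
    rw [← Finset.HasAntidiagonal.mem_antidiagonal.mp hp]
    ring

/-- `(q ^ (-(k + r)); q)_k` in terms of `(q;q)`. -/
lemma qP_neg (q : ℂ) (hq0 : q ≠ 0) (hq : ∀ n, qP q q n ≠ 0) (k r : ℕ) :
    qP (q ^ (-((k + r : ℕ) : ℤ))) q k =
      qP q q (k + r) * (-1) ^ k * q ^ (k * (k - 1) / 2) / (qP q q r * q ^ ((k + r) * k)) := by
  induction k generalizing r with
  | zero =>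
    have h0 : ∀ c, qP c q 0 = 1 := fun c => by simp [qP]
    simp [h0, div_self (hq r)]
  | succ k ih =>
    have h := ih (r + 1)
    rw [show k + (r + 1) = k + 1 + r by ring] at h
    have hr := hq r
    have hr1 : 1 - q * q ^ r ≠ 0 := fun h => hq (r + 1) (by rw [qP_succ, h, mul_zero])
    rw [qP_succ, h, triangle_succ', qP_succ q q r]
    have e : q ^ (-((k + 1 + r : ℕ) : ℤ)) = (q ^ (k + 1 + r))⁻¹ := by
      rw [zpow_neg, zpow_natCast]
    rw [e]
    field_simp
    ring

lemma neg_pow_mul_qP (a b q : ℂ) (ha : a ≠ 0) (hq0 : q ≠ 0) (j m : ℕ) :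
    (-a) ^ m * qP (b * q ^ (1 + (j : ℤ) - ((j + m : ℕ) : ℤ)) / a) q m =
      qPH b a q m / q ^ (m * (m - 1) / 2) := by
  have h : ∀ m : ℕ, (-a) ^ m * qP (b * q ^ (1 - (m : ℤ)) / a) q m * q ^ (m * (m - 1) / 2) =
      qPH b a q m := by
    intro m
    -- reversing the product makes its factors independent of `m`
    have h1 : qP (b * q ^ (1 - (m : ℤ)) / a) q m =
        ∏ i ∈ Finset.range m, (1 - b / a * (q ^ i)⁻¹) := by
      rw [qP, ← Finset.prod_range_reflect]
      refine Finset.prod_congr rfl fun i hi => ?_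
      have hi' := Finset.mem_range.mp hi
      have e : q ^ (1 - (m : ℤ)) * q ^ (m - 1 - i) = (q ^ i)⁻¹ := by
        rw [← zpow_natCast q (m - 1 - i), ← zpow_add₀ hq0, ← zpow_natCast, ← zpow_neg]
        congr 1
        omega
      rw [← e]
      ring
    rw [h1]
    clear h1
    induction m with
    | zero => simp [qPH]
    | succ m ih =>
      rw [qPH_succ, ← ih, Finset.prod_range_succ, triangle_succ']
      field_simp
      ring
  rw [eq_div_iff (pow_ne_zero _ hq0), ← h m]
  congr 4
  push_cast
  ring_nf

/-- The `x ^ k` coefficient (up to the factor `q ^ k`) of `pₙ(x; a | q)`. -/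
noncomputable def lqLCoeff (n : ℕ) (a q : ℂ) (k : ℕ) : ℂ :=
  qP (q ^ (-(n : ℤ))) q k / (qP q q k * qP (a * q) q k)

lemma qP_neg_eq_zero (q : ℂ) (hq0 : q ≠ 0) {n k : ℕ} (h : n < k) :
    qP (q ^ (-(n : ℤ))) q k = 0 := by
  refine Finset.prod_eq_zero (Finset.mem_range.mpr h) ?_
  rw [zpow_neg, zpow_natCast, inv_mul_cancel₀ (pow_ne_zero _ hq0), sub_self]

lemma qP_zero_left (q : ℂ) (k : ℕ) : qP 0 q k = 1 := by simp [qP]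

/-- The series terminates; any cut-off `M ≥ n` may be used. -/
lemma lqL_eq_sum (n M : ℕ) (hM : n ≤ M) (x a q : ℂ) (hq0 : q ≠ 0) :
    lqL n x a q = ∑ k ∈ Finset.range (M + 1), lqLCoeff n a q k * (q * x) ^ k := by
  unfold lqL qHyp
  rw [tsum_eq_sum (s := Finset.range (M + 1))]
  · refine Finset.sum_congr rfl fun k _ => ?_
    simp [lqLCoeff, qP_zero_left]
  · intro k hk
    have : n < k := by simp at hk; omega
    simp only [List.map_cons, List.prod_cons, qP_neg_eq_zero q hq0 this, zero_mul, zero_div]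

/-- The summand `j = k + r`, `n = k + r + m` of the coefficient identity, expressed through the
summand of `qVandermonde`. -/
lemma connection_term (q a b : ℂ) (hq0 : q ≠ 0) (ha : a ≠ 0) (hq : ∀ n, qP q q n ≠ 0)
    (hqa : ∀ n, qP (q * a) q n ≠ 0) (hqb : ∀ n, qP (q * b) q n ≠ 0) (k r m : ℕ) :
    q ^ (-(((k + r + m) * (k + r + m - 1) / 2 : ℕ) : ℤ)) / qP (q * a) q (k + r + m) *
      ((q ^ ((k + r) * (k + r - 1) / 2 + (k + r + m) * m) * (-a) ^ m *
        (qP (q ^ (m + 1)) q (k + r) * qP (q * b) q (k + r)) *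
        qP (b * q ^ (1 + ((k + r : ℕ) : ℤ) - ((k + r + m : ℕ) : ℤ)) / a) q m / qP q q (k + r)) *
        lqLCoeff (k + r) b q k) =
    lqLCoeff (k + r + m) a q k * (qP q q (r + m) / qP (a * q ^ (k + 1)) q (r + m)) *
      ((qP (b * q ^ (k + 1)) q r / qP q q r) *
        (qPH (b * q ^ (k + 1)) (a * q ^ (k + 1)) q m / qP q q m)) := by
  have hA : qP (q * a) q (k + r + m) =
      qP (q * a) q k * qP (a * q ^ (k + 1)) q (r + m) := by
    rw [add_assoc, qP_add]; congr 2; ring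
  have hB : qP (q * b) q (k + r) = qP (q * b) q k * qP (b * q ^ (k + 1)) q r := by
    rw [qP_add]; congr 2; ring
  have hQ : qP (q ^ (m + 1)) q (k + r) = qP q q (k + r + m) / qP q q m := by
    rw [eq_div_iff (hq m), add_comm (k + r) m, qP_add q q m, pow_succ']; ring
  have hA0 : qP (a * q ^ (k + 1)) q (r + m) ≠ 0 := fun h => hqa (k + r + m) (by rw [hA, h, mul_zero])
  have hN := neg_pow_mul_qP a b q ha hq0 (k + r) m
  have hX := qP_neg q hq0 hq k r
  have hY := qP_neg q hq0 hq k (r + m)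
  rw [← add_assoc] at hY
  have h1 := hq k
  have h2 := hq r
  have h3 := hq m
  have h4 := hq (k + r)
  have h5 := hq (r + m)
  have h6 := hqa k
  have h7 := hqb k
  rw [lqLCoeff, lqLCoeff, hX, hY, hA, hB, hQ, qPH_mul, zpow_neg, zpow_natCast,
    triangle_add (k + r) m, mul_comm a q, mul_comm b q]
  generalize qP (b * q ^ (1 + ((k + r : ℕ) : ℤ) - ((k + r + m : ℕ) : ℤ)) / a) q m = Z at *
  -- isolates the product `(-a) ^ m * Z`, the only place where `hN` applies
  have hZ : ∀ c d : ℂ, c * (-a) ^ m * d * Z = c * d * ((-a) ^ m * Z) := fun c d => by ring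
  rw [hZ, hN]
  -- the powers of `q` balance because `2 * (m * (m - 1) / 2) = m * m - m`
  have hT : q ^ (m * (m - 1) / 2) * q ^ (m * (m - 1) / 2) * q ^ m = q ^ (m * m) := by
    rw [← pow_add, ← pow_add]
    congr 1
    obtain ⟨t, ht⟩ : 2 ∣ m * (m - 1) := (Nat.even_mul_pred_self m).two_dvd
    have h8 : m * (m - 1) + m = m * m := by cases m <;> simp; ring
    omega
  simp only [pow_add, add_mul, ← hT]
  generalize q ^ (m * (m - 1) / 2) = T at *
  have hT0 : T ≠ 0 := fun h => pow_ne_zero (m * m) hq0 (by rw [← hT, h]; ring)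
  rw [pow_add] at hA0
  field_simp
  ring

theorem stmt13 (q : ℝ) (hq : q ∈ Set.Ioo (0:ℝ) 1)
    (a b : ℝ) (ha : a ∈ Set.Ioo 0 q⁻¹) (hb : b ∈ Set.Ioo 0 q⁻¹)
    (n : ℕ) (x : ℂ) :
    lqL n x (a : ℂ) q =
      ((q : ℂ) ^ (-((n * (n - 1) / 2 : ℕ) : ℤ)) / qP ((q : ℂ) * a) q n) *
        ∑ j ∈ Finset.range (n + 1),
          ((q : ℂ) ^ (j * (j - 1) / 2 + n * (n - j)) * (-(a : ℂ)) ^ (n - j) *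
              (qP ((q : ℂ) ^ (n - j + 1)) q j * qP ((q : ℂ) * b) q j) *
              qP ((b : ℂ) * (q : ℂ) ^ (1 + (j : ℤ) - (n : ℤ)) / a) q (n - j) /
              qP q q j) *
            lqL j x (b : ℂ) q := by
  obtain ⟨hq0, hq1⟩ := hq
  have hqc : (q : ℂ) ≠ 0 := by exact_mod_cast hq0.ne'
  have hac : (a : ℂ) ≠ 0 := by exact_mod_cast ha.1.ne'
  have key : ∀ c : ℝ, c < 1 → 0 < c → ∀ n, qP (c : ℂ) q n ≠ 0 := by
    intro c hc hc0 n
    refine Finset.prod_ne_zero_iff.mpr fun i _ h => ?_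
    have h1 : 1 - c * q ^ i = 0 := by exact_mod_cast h
    have h2 : q ^ i ≤ 1 := pow_le_one₀ hq0.le hq1.le
    nlinarith [pow_pos hq0 i]
  have hQ := key q hq1 hq0
  have key2 : ∀ c ∈ Set.Ioo 0 q⁻¹, ∀ n, qP ((q : ℂ) * c) q n ≠ 0 := by
    intro c hc n
    have h := key (q * c) (by
      have := mul_lt_mul_of_pos_left hc.2 hq0
      rwa [mul_inv_cancel₀ hq0.ne'] at this) (mul_pos hq0 hc.1) n
    rwa [Complex.ofReal_mul] at h
  have hA := key2 a ha
  have hB := key2 b hb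
  generalize (q : ℂ) = q at *
  generalize (a : ℂ) = a at *
  generalize (b : ℂ) = b at *
  rw [lqL_eq_sum n n le_rfl x a q hqc]
  have hin : ∀ f : ℕ → ℂ, ∑ j ∈ Finset.range (n + 1), f j * lqL j x b q =
      ∑ k ∈ Finset.range (n + 1), ∑ j ∈ Finset.range (n + 1),
        f j * (lqLCoeff j b q k * (q * x) ^ k) := fun f => by
    rw [Finset.sum_comm]
    refine Finset.sum_congr rfl fun j hj => ?_
    rw [lqL_eq_sum j n (Nat.lt_succ_iff.mp (Finset.mem_range.mp hj)) x b q hqc, Finset.mul_sum]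
  rw [hin, Finset.mul_sum]
  refine Finset.sum_congr rfl fun k hk => ?_
  obtain ⟨N, rfl⟩ := Nat.exists_eq_add_of_le (Nat.lt_succ_iff.mp (Finset.mem_range.mp hk))
  simp only [← mul_assoc]
  rw [← Finset.sum_mul, ← mul_assoc]
  congr 1
  -- the terms with `j < k` vanish
  rw [add_assoc k N 1, Finset.sum_range_add, Finset.sum_eq_zero, zero_add]
  swap
  · intro j hj
    rw [lqLCoeff, qP_neg_eq_zero q hqc (Finset.mem_range.mp hj), zero_div, mul_zero]
  have hA0 : qP (a * q ^ (k + 1)) q N ≠ 0 := fun h => hA (k + N) (by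
    rw [qP_add, show q * a * q ^ k = a * q ^ (k + 1) by ring, h, mul_zero])
  have hV := qVandermonde (a * q ^ (k + 1)) (b * q ^ (k + 1)) q hQ N
  calc lqLCoeff (k + N) a q k
      = lqLCoeff (k + N) a q k * (qP q q N / qP (a * q ^ (k + 1)) q N) *
          (qP (a * q ^ (k + 1)) q N / qP q q N) := by
        have := hQ N
        field_simp
    _ = _ := by
        rw [← hV, Finset.Nat.sum_antidiagonal_eq_sum_range_succ_mk, Finset.mul_sum, Finset.mul_sum]
        refine Finset.sum_congr rfl fun r hr => ?_
        obtain ⟨m, rfl⟩ := Nat.exists_eq_add_of_le (Nat.lt_succ_iff.mp (Finset.mem_range.mp hr))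
        have h := connection_term q a b hqc hac hQ hA hB k r m
        have e1 : r + m - r = m := by omega
        have e2 : k + (r + m) - (k + r) = m := by omega
        simp only [e1, e2]
        rw [← add_assoc k r m, ← h]
        simp only [mul_assoc]
end

section
/- Let q ∈ (0,1), α, β ∈ (-1,∞), n ∈ ℕ₀, and x ∈ ℂ. Then the q-Laguerre polynomials satisfy the connection relation L_n^{(α)}(x;q) = (q^{n(α-β)} / (q;q)_n) ∑_{j=0}^n (-1)^{n-j} q^{(n-j)(n-j-1)/2} (q^{n-j+1};q)_j (q^{j-n+β-α+1};q)_{n-j} · L_j^{(β)}(x;q). -/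
/-!
Write `h_N(a) = (a;q)_N / (q;q)_N`, `a = q^{α+1}`, `b = q^{β+1}` and `d = a / b = q^{α-β}`.
Reversing `(q^{-n};q)_k` gives the expansion (`qLag_eq_sum`)
`L_n^{(α)}(x;q) = ∑_k (-1)^k q^{k(k-1)} (a x)^k h_{n-k}(a q^k) / (q;q)_k`,
and reversing the second Pochhammer factor of the connection coefficients (`qP_reverse`) turns
the right-hand side of the theorem into `∑_j d^j h_{n-j}(d) L_j^{(β)}(x;q)`.
Comparing coefficients of `x^k`, the claim becomes the `q`-Chu–Vandermonde identity
`h_N(d B) = ∑_{i+j=N} d^i h_i(B) h_j(d)` with `B = b q^k` and `N = n - k` (`qBin_vandermonde`).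

This identity is proved by generating functions. The series `F_a(t) = ∑ h_N(a) t^N` satisfies
`(1 - t) F_a(t) = (1 - a t) F_a(q t)`, so `G(t) = F_B(d t) F_d(t)` satisfies
`(1 - t) G(t) = (1 - d B t) G(q t)` after cancelling `1 - d t`; this functional equation and the
constant term determine a power series uniquely, hence `G = F_{dB}`.
-/

open scoped Real

/-- The `q`-Laguerre polynomial `Lₙ^{(α)}(x; q)`. -/
noncomputable def qLag (n : ℕ) (α q : ℝ) (x : ℂ) : ℂ :=
  (qP (rq q (α + 1)) q n / qP q q n) *
    qHyp [(q : ℂ) ^ (-(n : ℤ))] [rq q (α + 1)] q (-(rq q ((n : ℝ) + α + 1)) * x)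

/-- The coefficient `h_N(a) = (a;q)_N / (q;q)_N` of the `q`-binomial series. -/
noncomputable def qBin (q a : ℂ) (N : ℕ) : ℂ := qP a q N / qP q q N

/-- The `q`-binomial series `F_a(t) = ∑ h_N(a) t^N`. -/
noncomputable def qBinSeries (q a : ℂ) : PowerSeries ℂ := PowerSeries.mk (qBin q a)

lemma qP_zero (a q : ℂ) : qP a q 0 = 1 := by simp [qP]

lemma qP_self_ne_zero {q : ℂ} (hq : ∀ k : ℕ, q ^ (k + 1) ≠ 1) (n : ℕ) : qP q q n ≠ 0 := by
  refine Finset.prod_ne_zero_iff.mpr fun k _ => ?_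
  rw [← pow_succ']
  exact sub_ne_zero.mpr (hq k).symm

lemma qBin_succ {q : ℂ} (hq : ∀ k : ℕ, q ^ (k + 1) ≠ 1) (a : ℂ) (n : ℕ) :
    (1 - q ^ (n + 1)) * qBin q a (n + 1) = (1 - a * q ^ n) * qBin q a n := by
  have h1 := qP_self_ne_zero hq n
  have h2 : 1 - q ^ (n + 1) ≠ 0 := sub_ne_zero.mpr (hq n).symm
  have h3 : qP q q (n + 1) = qP q q n * (1 - q ^ (n + 1)) := by rw [qP_succ, ← pow_succ']
  rw [qBin, qBin, h3, qP_succ]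
  field_simp

open PowerSeries in
/-- The coefficient recursion equivalent to the functional equation
`(1 - t) G(t) = (1 - a t) G(q t)`. -/
lemma functional_eq_iff (q a : ℂ) (G : PowerSeries ℂ) :
    (1 - X) * G = (1 - C a * X) * rescale q G ↔
      ∀ n, (1 - q ^ (n + 1)) * coeff (n + 1) G = (1 - a * q ^ n) * coeff n G := by
  rw [PowerSeries.ext_iff]
  constructor
  · intro h n
    have := h (n + 1)
    simp only [sub_mul, one_mul, map_sub, mul_assoc, coeff_succ_X_mul, coeff_C_mul,
      coeff_rescale] at this
    linear_combination this
  · intro h n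
    cases n with
    | zero =>
      have h0 := coeff_rescale G q 0
      simp only [coeff_zero_eq_constantCoeff, pow_zero, one_mul] at h0
      simp [sub_mul, mul_assoc, h0]
    | succ n =>
      simp only [sub_mul, one_mul, map_sub, mul_assoc, coeff_succ_X_mul, coeff_C_mul,
        coeff_rescale]
      linear_combination h n

open PowerSeries in
lemma qBinSeries_functional {q : ℂ} (hq : ∀ k : ℕ, q ^ (k + 1) ≠ 1) (a : ℂ) :
    (1 - X) * qBinSeries q a = (1 - C a * X) * rescale q (qBinSeries q a) := by
  rw [functional_eq_iff]
  intro n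
  simpa [qBinSeries] using qBin_succ hq a n

open PowerSeries in
/-- Multiplicativity of the `q`-binomial series, `F_B(d t) F_d(t) = F_{dB}(t)`. -/
lemma qBinSeries_mul {q : ℂ} (hq : ∀ k : ℕ, q ^ (k + 1) ≠ 1) (d B : ℂ) :
    rescale d (qBinSeries q B) * qBinSeries q d = qBinSeries q (d * B) := by
  set G := rescale d (qBinSeries q B) * qBinSeries q d with hG
  have hB := congrArg (rescale d) (qBinSeries_functional hq B)
  have hd := qBinSeries_functional hq d
  have hC : rescale d (C B) = C B := by
    ext n
    cases n <;> simp [coeff_rescale, coeff_C]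
  simp only [map_mul, map_sub, map_one, rescale_X, hC, rescale_rescale] at hB
  rw [mul_comm q d, ← rescale_rescale] at hB
  have hne : (1 - C d * X : PowerSeries ℂ) ≠ 0 := by
    intro h
    have := congrArg (coeff 0) h
    simp at this
  have hfun : (1 - X) * G = (1 - C (d * B) * X) * rescale q G := by
    apply mul_left_cancel₀ hne
    rw [hG, map_mul, map_mul]
    linear_combination (1 - X) * qBinSeries q d * hB +
      (1 - C d * C B * X) * rescale q (rescale d (qBinSeries q B)) * hd
  have hrec := (functional_eq_iff q (d * B) G).mp hfun
  ext n
  induction n with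
  | zero => simp [hG, qBinSeries, qBin, qP_zero, rescale_mk]
  | succ n ih =>
    apply mul_left_cancel₀ (sub_ne_zero.mpr (hq n).symm)
    rw [hrec n, ih]
    simpa [qBinSeries] using (qBin_succ hq (d * B) n).symm

/-- The `q`-Chu–Vandermonde identity. -/
lemma qBin_vandermonde {q : ℂ} (hq : ∀ k : ℕ, q ^ (k + 1) ≠ 1) (d B : ℂ) (N : ℕ) :
    qBin q (d * B) N = ∑ i ∈ Finset.range (N + 1), d ^ i * qBin q B i * qBin q d (N - i) := by
  have h := congrArg (PowerSeries.coeff N) (qBinSeries_mul hq d B)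
  rw [PowerSeries.coeff_mul, Finset.Nat.sum_antidiagonal_eq_sum_range_succ_mk] at h
  simpa [qBinSeries] using h.symm

/-- Reversal of the Pochhammer symbol `(q^{1-m} c;q)_m`, where `e = q^{1-m} c` and `d = 1 / c`. -/
lemma qP_reverse {q c d e : ℂ} (hq0 : q ≠ 0) (m : ℕ) (hdc : d * c = 1)
    (he : e * q ^ m = c * q) :
    d ^ m * ((-1) ^ m * q ^ (m * (m - 1) / 2) * qP e q m) = qP d q m := by
  have h1 : (-1 : ℂ) ^ m * q ^ (m * (m - 1) / 2) = ∏ i ∈ Finset.range m, (-1 * q ^ i) := by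
    rw [Finset.prod_mul_distrib, Finset.prod_const, Finset.card_range,
      Finset.prod_pow_eq_pow_sum, Finset.sum_range_id]
  have h2 : d ^ m = ∏ _i ∈ Finset.range m, d := by simp
  rw [h1, h2, qP, ← Finset.prod_range_reflect (fun k => 1 - e * q ^ k), qP,
    ← Finset.prod_mul_distrib, ← Finset.prod_mul_distrib]
  refine Finset.prod_congr rfl fun i hi => ?_
  have hi := Finset.mem_range.mp hi
  have h3 : q ^ i * q ^ (m - 1 - i) * q = q ^ m := by
    rw [← pow_add, ← pow_succ]; congr 1; omega
  have h4 : e * (q ^ i * q ^ (m - 1 - i)) = c := by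
    apply mul_right_cancel₀ hq0
    rw [← he, ← h3]; ring
  linear_combination d * h4 + hdc

lemma qP_neg_pow {q : ℂ} (hq0 : q ≠ 0) (n k : ℕ) (hk : k ≤ n) :
    qP (q ^ (-(n : ℤ))) q k * q ^ (n * k) * qP q q (n - k) =
      (-1) ^ k * q ^ (k * (k - 1) / 2) * qP q q n := by
  induction k with
  | zero => simp [qP_zero]
  | succ k ih =>
    have ih := ih (by omega)
    obtain ⟨r, rfl⟩ : ∃ r, n = k + 1 + r := ⟨n - (k + 1), by omega⟩
    rw [show k + 1 + r - k = r + 1 by omega, qP_succ q] at ih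
    rw [show k + 1 + r - (k + 1) = r by omega, qP_succ, Nat.triangle_succ]
    have hz : q ^ (-((k + 1 + r : ℕ) : ℤ)) * q ^ (k + 1 + r) = 1 := by
      rw [zpow_neg, zpow_natCast]
      exact inv_mul_cancel₀ (pow_ne_zero _ hq0)
    generalize q ^ (-((k + 1 + r : ℕ) : ℤ)) = z at *
    have h1 : q ^ ((k + 1 + r) * (k + 1)) = q ^ ((k + 1 + r) * k) * q ^ (k + 1 + r) := by
      rw [← pow_add]; congr 1
    have h2 : (1 - z * q ^ k) * q ^ (k + 1 + r) = - q ^ k * (1 - q * q ^ r) := by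
      have : q ^ (k + 1 + r) = q ^ k * (q * q ^ r) := by ring
      linear_combination (-q ^ k) * hz + this
    rw [h1, pow_succ (-1 : ℂ), pow_add q (k * (k - 1) / 2)]
    linear_combination (qP z q k * q ^ ((k + 1 + r) * k) * qP q q r) * h2 - q ^ k * ih

lemma qP_neg_pow_eq_zero {q : ℂ} (hq0 : q ≠ 0) (n k : ℕ) (hk : n < k) :
    qP (q ^ (-(n : ℤ))) q k = 0 := by
  refine Finset.prod_eq_zero (Finset.mem_range.mpr hk) ?_
  rw [zpow_neg, zpow_natCast, inv_mul_cancel₀ (pow_ne_zero _ hq0), sub_self]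

lemma ofReal_pow_ne_one {q : ℝ} (hq : q ∈ Set.Ioo (0 : ℝ) 1) (k : ℕ) :
    (q : ℂ) ^ (k + 1) ≠ 1 := by
  have := pow_lt_one₀ hq.1.le hq.2 (Nat.succ_ne_zero k)
  exact_mod_cast this.ne

lemma rq_add {q : ℝ} (hq : 0 < q) (s t : ℝ) : rq q (s + t) = rq q s * rq q t := by
  simp [rq, Real.rpow_add hq]

lemma rq_natCast (q : ℝ) (n : ℕ) : rq q n = (q : ℂ) ^ n := by
  simp [rq]

lemma qP_rq_ne_zero {q α : ℝ} (hq : q ∈ Set.Ioo (0 : ℝ) 1) (hα : -1 < α) (n : ℕ) :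
    qP (rq q (α + 1)) q n ≠ 0 := by
  refine Finset.prod_ne_zero_iff.mpr fun k _ => sub_ne_zero.mpr ?_
  have h1 : q ^ (α + 1) < 1 := Real.rpow_lt_one hq.1.le hq.2 (by linarith)
  have h2 : q ^ k ≤ 1 := pow_le_one₀ hq.1.le hq.2.le
  have h3 : q ^ (α + 1) * q ^ k < 1 :=
    mul_lt_one_of_nonneg_of_lt_one_left (Real.rpow_nonneg hq.1.le _) h1 h2
  unfold rq
  exact_mod_cast h3.ne.symm

/-- Explicit expansion of the `q`-Laguerre polynomial in powers of `x`. -/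
lemma qLag_eq_sum {q α : ℝ} (hq : q ∈ Set.Ioo (0 : ℝ) 1) (hα : -1 < α) (n : ℕ) (x : ℂ) :
    qLag n α q x = ∑ k ∈ Finset.range (n + 1),
      ((-1) ^ k * ((q : ℂ) ^ (k * (k - 1) / 2)) ^ 2 * x ^ k / qP q q k) *
        (rq q (α + 1) ^ k * qBin q (rq q (α + 1) * (q : ℂ) ^ k) (n - k)) := by
  have hq0 : (q : ℂ) ≠ 0 := by exact_mod_cast hq.1.ne'
  have hqn := qP_self_ne_zero (ofReal_pow_ne_one hq)
  have han := qP_rq_ne_zero hq hα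
  rw [qLag, qHyp, tsum_eq_sum (s := Finset.range (n + 1)), Finset.mul_sum]
  · refine Finset.sum_congr rfl fun k hk => ?_
    have hk : k ≤ n := by have := Finset.mem_range.mp hk; omega
    have hs : rq q ((n : ℝ) + α + 1) = (q : ℂ) ^ n * rq q (α + 1) := by
      rw [add_assoc, rq_add hq.1, rq_natCast]
    have h1 := qP_neg_pow hq0 n k hk
    have h2 := qP_add (rq q (α + 1)) q k (n - k)
    rw [Nat.add_sub_cancel' hk] at h2
    have e1 := hqn n
    have e2 := hqn k
    have e3 := hqn (n - k)
    have e4 := han k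
    rw [hs, h2, qBin]
    simp only [List.map_cons, List.map_nil, List.prod_cons, List.prod_nil, mul_one,
      List.length_cons, List.length_nil]
    have h3 : (-((q : ℂ) ^ n * rq q (α + 1)) * x) ^ k =
        (-1) ^ k * (q : ℂ) ^ (n * k) * rq q (α + 1) ^ k * x ^ k := by
      rw [neg_mul, neg_pow, mul_pow, mul_pow, ← pow_mul]; ring
    rw [h3]
    have h5 : ((-1 : ℂ) ^ k) * (-1) ^ k = 1 := by rw [← mul_pow]; simp
    generalize rq q (α + 1) = a at *
    generalize qP ((q : ℂ) ^ (-(n : ℤ))) q k = z at *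
    generalize (q : ℂ) ^ (n * k) = w at *
    generalize (q : ℂ) ^ (k * (k - 1) / 2) = t at *
    generalize (-1 : ℂ) ^ k = s at *
    norm_num
    field_simp
    linear_combination (qP (a * (q : ℂ) ^ k) q (n - k) * a ^ k * x ^ k) *
      (t * s * s * h1 + s * t * t * qP q q n * h5)
  · intro k hk
    have hk : n < k := by
      by_contra h
      exact hk (Finset.mem_range.mpr (by omega))
    simp only [List.map_cons, List.map_nil, List.prod_cons, qP_neg_pow_eq_zero hq0 n k hk,
      zero_mul, zero_div]

/-- The connection coefficient simplifies to `d^j h_{n-j}(d)` with `d = q^{α-β}`. -/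
lemma connection_coeff {q : ℝ} (hq : q ∈ Set.Ioo (0 : ℝ) 1) (α β : ℝ) (n j : ℕ) (hj : j ≤ n) :
    rq q ((n : ℝ) * (α - β)) / qP q q n *
      ((-1 : ℂ) ^ (n - j) * (q : ℂ) ^ ((n - j) * (n - j - 1) / 2) *
        qP ((q : ℂ) ^ (n - j + 1)) q j *
        qP (rq q ((j : ℝ) - (n : ℝ) + β - α + 1)) q (n - j)) =
      rq q (α - β) ^ j * qBin q (rq q (α - β)) (n - j) := by
  have hq0 : (q : ℂ) ≠ 0 := by exact_mod_cast hq.1.ne'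
  have hqn := qP_self_ne_zero (ofReal_pow_ne_one hq)
  obtain ⟨m, rfl⟩ : ∃ m, n = j + m := ⟨n - j, by omega⟩
  rw [show j + m - j = m by omega]
  have h1 : rq q (((j + m : ℕ) : ℝ) * (α - β)) = rq q (α - β) ^ j * rq q (α - β) ^ m := by
    rw [← pow_add, mul_comm, rq, Real.rpow_mul hq.1.le, Real.rpow_natCast]
    simp [rq]
  have h2 : rq q (α - β) * rq q (β - α) = 1 := by
    rw [← rq_add hq.1]; simp [rq]
  have h3 : rq q ((j : ℝ) - ((j + m : ℕ) : ℝ) + β - α + 1) * (q : ℂ) ^ m = rq q (β - α) * q := by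
    have : (q : ℂ) = rq q 1 := by simp [rq]
    nth_rewrite 2 [this]
    rw [← rq_natCast, ← rq_add hq.1, ← rq_add hq.1]
    congr 1; push_cast; ring
  have h4 := qP_reverse hq0 m h2 h3
  have h5 := qP_add (q : ℂ) q m j
  rw [← pow_succ', add_comm m j] at h5
  have e1 := hqn (j + m)
  have e2 := hqn m
  rw [h1, qBin, ← h4]
  field_simp
  rw [h5]
  ring

theorem stmt15 (q : ℝ) (hq : q ∈ Set.Ioo (0:ℝ) 1)
    (α β : ℝ) (hα : -1 < α) (hβ : -1 < β) (n : ℕ) (x : ℂ) :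
    qLag n α q x =
      (rq q ((n : ℝ) * (α - β)) / qP q q n) *
        ∑ j ∈ Finset.range (n + 1),
          (-1 : ℂ) ^ (n - j) * (q : ℂ) ^ ((n - j) * (n - j - 1) / 2) *
            qP ((q : ℂ) ^ (n - j + 1)) q j *
            qP (rq q ((j : ℝ) - (n : ℝ) + β - α + 1)) q (n - j) *
            qLag j β q x := by
  have hd : rq q (α + 1) = rq q (α - β) * rq q (β + 1) := by
    rw [← rq_add hq.1]; congr 1; ring
  rw [Finset.mul_sum]
  have hR : ∀ j ∈ Finset.range (n + 1),
      rq q ((n : ℝ) * (α - β)) / qP q q n *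
        ((-1 : ℂ) ^ (n - j) * (q : ℂ) ^ ((n - j) * (n - j - 1) / 2) *
            qP ((q : ℂ) ^ (n - j + 1)) q j *
            qP (rq q ((j : ℝ) - (n : ℝ) + β - α + 1)) q (n - j) *
            qLag j β q x) =
      ∑ k ∈ Finset.range (j + 1), rq q (α - β) ^ j * qBin q (rq q (α - β)) (n - j) *
        (((-1) ^ k * ((q : ℂ) ^ (k * (k - 1) / 2)) ^ 2 * x ^ k / qP q q k) *
        (rq q (β + 1) ^ k * qBin q (rq q (β + 1) * (q : ℂ) ^ k) (j - k))) := by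
    intro j hj
    have hj : j ≤ n := by have := Finset.mem_range.mp hj; omega
    rw [← mul_assoc, connection_coeff hq α β n j hj, qLag_eq_sum hq hβ, Finset.mul_sum]
  -- Exchange the order of summation over the triangle `k ≤ j ≤ n`.
  rw [Finset.sum_congr rfl hR, qLag_eq_sum hq hα,
    Finset.sum_comm' (t' := Finset.range (n + 1)) (s' := fun k => Finset.Ico k (n + 1))
      (by intro j k; simp only [Finset.mem_range, Finset.mem_Ico]; omega)]
  refine Finset.sum_congr rfl fun k hk => ?_
  have hk : k ≤ n := by have := Finset.mem_range.mp hk; omega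
  rw [Finset.sum_Ico_eq_sum_range, show n + 1 - k = n - k + 1 by omega, hd, mul_assoc (rq q _),
    qBin_vandermonde (ofReal_pow_ne_one hq), Finset.mul_sum, Finset.mul_sum]
  refine Finset.sum_congr rfl fun i _ => ?_
  rw [show k + i - k = i by omega, show n - (k + i) = n - k - i by omega, pow_add, mul_pow]
  ring
end
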